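/- arXiv:2109.11378 — 2 statements merged into one kernel-verified Lean document; each statement's English description precedes it below -/
import Mathlib

section
/- Let n ≥ 1 and let λ, μ be partitions with ⟨s_μ, p_n ∘ s_λ⟩ nonzero. Define a_r = ⌊(n|λ| − Σ_{i>r} λ_i)/r⌋ for r ≥ 1 and b_c = ⌊(n|λ| − Σ_{j>c} λ'_j)/c⌋ for c ≥ 1, and set Ξ¹ = (a_1, a_2, …) and Ξ² = (b_1, b_2, …)'. Then [μ] ⊆ [Ξ¹] and [μ] ⊆ [Ξ²]; that is, μ_r ≤ a_r for all r and μ'_c ≤ b_c for all c, so [μ] ⊆ [Ξ¹] ∩ [Ξ²]. -/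
open MvPolynomial Finset

/-- Semistandardness of a filling of an arbitrary finite set of cells `s ⊆ ℕ × ℕ`
(cells are `(row, column)` pairs): entries weakly increase along rows and strictly
increase down columns (for adjacent cells that both lie in `s`). -/
def IsSemistandardOn (s : Finset (ℕ × ℕ)) {N : ℕ} (T : s → Fin N) : Prop :=
  (∀ (i j : ℕ) (h1 : (i, j) ∈ s) (h2 : (i, j + 1) ∈ s),
      T ⟨(i, j), h1⟩ ≤ T ⟨(i, j + 1), h2⟩) ∧
  (∀ (i j : ℕ) (h1 : (i, j) ∈ s) (h2 : (i + 1, j) ∈ s),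
      T ⟨(i, j), h1⟩ < T ⟨(i + 1, j), h2⟩)

open scoped Classical in
/-- The generating polynomial, in `N` variables, of semistandard fillings of the cell
set `s` with entries in `{0, …, N-1}`. -/
noncomputable def cellSchur (N : ℕ) (s : Finset (ℕ × ℕ)) : MvPolynomial (Fin N) ℤ :=
  ∑ T ∈ Finset.univ.filter (fun T : s → Fin N => IsSemistandardOn s T),
    ∏ c : s, X (T c)

/-- The Schur polynomial `s_μ(x_1, …, x_N)`: the generating function of semistandard
Young tableaux of shape `μ` with entries in `{0, …, N-1}`. -/
noncomputable def schurPoly (N : ℕ) (μ : YoungDiagram) : MvPolynomial (Fin N) ℤ :=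
  cellSchur N μ.cells

/-- `(c, r)` (column `c`, row `r`, 0-indexed) is an outer corner of `μ`: it is not a
cell of `μ`, and adding it to `μ` again yields a Young diagram. -/
def IsOuterCorner (μ : YoungDiagram) (c r : ℕ) : Prop :=
  (r, c) ∉ μ ∧ ∃ ν : YoungDiagram, ν.cells = insert (r, c) μ.cells

/-- `Σ_{i > r} λ_i` (1-indexed), the sum of the parts of `λ` strictly below row `r`:
since `λ.rowLen i = 0` for `i ≥ λ.colLen 0`, this is `∑_{i = r}^{λ.colLen 0 - 1} λ.rowLen i`
(0-indexed). -/
def tailSum (lam : YoungDiagram) (r : ℕ) : ℕ :=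
  ∑ i ∈ Finset.Ico r (lam.colLen 0), lam.rowLen i

namespace SXP

/-- number of cells in rows `< m` -/
def rowHead (l : YoungDiagram) (m : ℕ) : ℕ := (l.cells.filter (fun c => c.1 < m)).card

/-- number of cells in columns `< m` -/
def colHead (l : YoungDiagram) (m : ℕ) : ℕ := (l.cells.filter (fun c => c.2 < m)).card

lemma colHead_eq (l : YoungDiagram) (m : ℕ) : colHead l m = rowHead l.transpose m := by
  unfold colHead rowHead
  refine Finset.card_bij (fun c _ => c.swap) ?_ ?_ ?_
  · intro c hc
    simp only [Finset.mem_filter, YoungDiagram.mem_cells, YoungDiagram.mem_transpose] at hc ⊢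
    simpa using hc
  · intro a _ b _ h
    exact Prod.swap_injective h
  · intro b hb
    refine ⟨b.swap, ?_, by simp⟩
    simp only [Finset.mem_filter, YoungDiagram.mem_cells, YoungDiagram.mem_transpose] at hb ⊢
    simpa using hb

lemma rowHead_succ (l : YoungDiagram) (m : ℕ) :
    rowHead l (m + 1) = rowHead l m + l.rowLen m := by
  unfold rowHead
  rw [YoungDiagram.rowLen_eq_card, YoungDiagram.row, ← Finset.card_union_of_disjoint]
  · congr 1
    ext c
    simp only [Finset.mem_union, Finset.mem_filter]
    constructor
    · rintro ⟨h1, h2⟩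
      rcases Nat.lt_succ_iff_lt_or_eq.1 h2 with h | h
      · exact Or.inl ⟨h1, h⟩
      · exact Or.inr ⟨h1, h⟩
    · rintro (⟨h1, h2⟩ | ⟨h1, h2⟩)
      · exact ⟨h1, by omega⟩
      · exact ⟨h1, by omega⟩
  · rw [Finset.disjoint_left]
    intro c hc hc'
    simp only [Finset.mem_filter] at hc hc'
    omega

lemma rowHead_injective : Function.Injective rowHead := by
  intro a b h
  have h1 : ∀ m, a.rowLen m = b.rowLen m := by
    intro m
    have h2 := rowHead_succ a m
    have h3 := rowHead_succ b m
    rw [h] at h2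
    omega
  ext ⟨i, j⟩
  simp only [YoungDiagram.mem_cells, YoungDiagram.mem_iff_lt_rowLen, h1]

lemma colHead_injective : Function.Injective colHead := by
  intro a b h
  have : rowHead a.transpose = rowHead b.transpose := by
    funext m
    rw [← colHead_eq, ← colHead_eq, h]
  exact YoungDiagram.transpose_eq_iff.1 (rowHead_injective this)

lemma card_transpose (l : YoungDiagram) : l.transpose.cells.card = l.cells.card := by
  simp [YoungDiagram.transpose]

lemma mul_rowLen_le (l : YoungDiagram) (r : ℕ) (hr : 1 ≤ r) :
    r * l.rowLen (r - 1) ≤ rowHead l r := by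
  have h : Finset.range r ×ˢ Finset.range (l.rowLen (r - 1)) ⊆
      l.cells.filter (fun c => c.1 < r) := by
    intro c hc
    simp only [Finset.mem_product, Finset.mem_range] at hc
    simp only [Finset.mem_filter, YoungDiagram.mem_cells]
    refine ⟨?_, hc.1⟩
    have : c = (c.1, c.2) := rfl
    rw [this, YoungDiagram.mem_iff_lt_rowLen]
    exact lt_of_lt_of_le hc.2 (l.rowLen_anti _ _ (by omega))
  have := Finset.card_le_card h
  simpa [rowHead] using this

lemma rowHead_add_tail (l : YoungDiagram) (r : ℕ) :
    rowHead l r + tailSum l r = l.cells.card := by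
  have key : ∀ k, rowHead l r + ∑ i ∈ Finset.Ico r (r + k), l.rowLen i = rowHead l (r + k) := by
    intro k
    induction k with
    | zero => simp
    | succ k ih =>
      rw [← add_assoc, Finset.sum_Ico_succ_top (by omega), ← add_assoc, ih, rowHead_succ]
  have hbig : ∀ m, l.colLen 0 ≤ m → rowHead l m = l.cells.card := by
    intro m hm
    unfold rowHead
    rw [Finset.filter_true_of_mem]
    intro c hc
    have h1 : (c.1, 0) ∈ l := l.up_left_mem le_rfl (Nat.zero_le _) ((YoungDiagram.mem_cells _).1 hc)
    rw [YoungDiagram.mem_iff_lt_colLen] at h1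
    omega
  unfold tailSum
  rcases le_total r (l.colLen 0) with h | h
  · obtain ⟨k, hk⟩ := Nat.exists_eq_add_of_le h
    rw [hk, key k, hbig _ (by omega)]
  · rw [Finset.Ico_eq_empty_of_le h, hbig r h]; simp

lemma final_ineq (l m : YoungDiagram) (n r : ℕ) (hn : 0 < n) (hr : 1 ≤ r)
    (h : rowHead m r ≤ n * rowHead l r) :
    m.rowLen (r - 1) ≤ (n * l.cells.card - tailSum l r) / r := by
  rw [Nat.le_div_iff_mul_le (by omega), mul_comm]
  refine (mul_rowLen_le m r hr).trans (h.trans ?_)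
  have h1 := rowHead_add_tail l r
  rw [← h1, mul_add]
  have : tailSum l r ≤ n * tailSum l r := Nat.le_mul_of_pos_left _ hn
  omega

/-- content of a filling -/
noncomputable def content {N : ℕ} {s : Finset (ℕ × ℕ)} (T : s → Fin N) : Fin N →₀ ℕ :=
  ∑ c : s, Finsupp.single (T c) 1

lemma content_apply {N : ℕ} {s : Finset (ℕ × ℕ)} (T : s → Fin N) (v : Fin N) :
    content T v = (Finset.univ.filter (fun c => T c = v)).card := by
  unfold content
  rw [Finsupp.finsetSum_apply, Finset.card_filter]
  simp [Finsupp.single_apply]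

lemma card_lt_eq {N : ℕ} {s : Finset (ℕ × ℕ)} (T : s → Fin N) (m : ℕ) :
    (Finset.univ.filter (fun c => (T c : ℕ) < m)).card =
      ∑ v ∈ Finset.univ.filter (fun v : Fin N => (v : ℕ) < m), content T v := by
  rw [Finset.card_eq_sum_card_fiberwise (f := T)
    (t := Finset.univ.filter (fun v : Fin N => (v : ℕ) < m))]
  · refine Finset.sum_congr rfl fun v hv => ?_
    rw [content_apply, Finset.filter_filter]
    congr 1
    ext c
    simp only [Finset.mem_filter, Finset.mem_univ, true_and] at hv ⊢
    constructor
    · exact fun h => h.2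
    · rintro rfl; exact ⟨hv, rfl⟩
  · intro c hc
    simpa using hc

lemma card_eq_content {N : ℕ} {s : Finset (ℕ × ℕ)} (T : s → Fin N) :
    s.card = ∑ v, content T v := by
  have := card_lt_eq T N
  simpa using this

open scoped Classical in
lemma coeff_schur (N : ℕ) (l : YoungDiagram) (m : Fin N →₀ ℕ) :
    coeff m (schurPoly N l) =
      ((Finset.univ.filter (fun T : l.cells → Fin N =>
        IsSemistandardOn l.cells T ∧ content T = m)).card : ℤ) := by
  unfold schurPoly cellSchur
  rw [coeff_sum, ← Finset.filter_filter, Finset.card_filter]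
  push_cast
  refine Finset.sum_congr rfl fun T _ => ?_
  have : (∏ c : l.cells, X (T c) : MvPolynomial (Fin N) ℤ) = monomial (content T) 1 := by
    unfold content
    rw [monomial_sum_one]
    rfl
  rw [this, coeff_monomial]

lemma exists_of_coeff_schur {N : ℕ} {l : YoungDiagram} {m : Fin N →₀ ℕ}
    (h : coeff m (schurPoly N l) ≠ 0) :
    ∃ T : l.cells → Fin N, IsSemistandardOn l.cells T ∧ content T = m := by
  classical
  rw [coeff_schur] at h
  have h' := Nat.cast_ne_zero.1 h
  rw [Finset.card_ne_zero] at h'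
  obtain ⟨T, hT⟩ := h'
  exact ⟨T, (Finset.mem_filter.1 hT).2⟩

/-- plethysm with the power sum -/
noncomputable def pleth (n N : ℕ) (f : MvPolynomial (Fin N) ℤ) : MvPolynomial (Fin N) ℤ :=
  aeval (fun i : Fin N => (X i : MvPolynomial (Fin N) ℤ) ^ n) f

lemma pleth_eq (n N : ℕ) (f : MvPolynomial (Fin N) ℤ) : pleth n N f = expand n f := rfl

lemma coeff_pleth_smul {n : ℕ} (N : ℕ) (hn : 0 < n) (f : MvPolynomial (Fin N) ℤ)
    (m : Fin N →₀ ℕ) : coeff (n • m) (pleth n N f) = coeff m f := by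
  rw [pleth_eq, coeff_expand_smul n hn.ne']

lemma exists_of_coeff_pleth {n N : ℕ} (hn : 0 < n) {f : MvPolynomial (Fin N) ℤ}
    {m : Fin N →₀ ℕ} (h : coeff m (pleth n N f) ≠ 0) :
    ∃ m', m = n • m' ∧ coeff m' f ≠ 0 := by
  have hd : ∀ i, n ∣ m i := by
    intro i
    by_contra hc
    exact h (by rw [pleth_eq]; exact coeff_expand_of_not_dvd f hc)
  have hm : m = n • (Finsupp.equivFunOnFinite.symm (fun i => m i / n)) := by
    ext i
    simp [Nat.mul_div_cancel' (hd i)]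
  refine ⟨_, hm, ?_⟩
  rw [hm, coeff_pleth_smul N hn] at h
  exact h

lemma row_le_of_ss {N : ℕ} {l : YoungDiagram} {T : l.cells → Fin N}
    (hT : IsSemistandardOn l.cells T) :
    ∀ (i j : ℕ) (h : (i, j) ∈ l.cells), i ≤ (T ⟨(i, j), h⟩ : ℕ) := by
  intro i
  induction i with
  | zero => intros; omega
  | succ i ih =>
    intro j h
    have h' : (i, j) ∈ l.cells := by
      rw [YoungDiagram.mem_cells] at h ⊢
      exact l.up_left_mem (by omega) le_rfl h
    have h1 := ih j h'
    have h2 : (T ⟨(i, j), h'⟩ : ℕ) < T ⟨(i + 1, j), h⟩ := hT.2 i j h' h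
    omega

lemma card_attach_filter (s : Finset (ℕ × ℕ)) (p : ℕ × ℕ → Prop) [DecidablePred p] :
    (Finset.univ.filter (fun c : s => p c.1)).card = (s.filter p).card := by
  refine Finset.card_bij (fun c _ => c.1) ?_ ?_ ?_
  · intro c hc
    simp only [Finset.mem_filter, Finset.mem_univ, true_and] at hc ⊢
    exact ⟨c.2, hc⟩
  · intro a _ b _ h
    exact Subtype.ext h
  · intro b hb
    simp only [Finset.mem_filter] at hb
    exact ⟨⟨b, hb.1⟩, by simpa using hb.2, rfl⟩

lemma card_lt_le_rowHead {N : ℕ} {l : YoungDiagram} {T : l.cells → Fin N}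
    (hT : IsSemistandardOn l.cells T) (m : ℕ) :
    (Finset.univ.filter (fun c => (T c : ℕ) < m)).card ≤ rowHead l m := by
  unfold rowHead
  rw [← card_attach_filter]
  refine Finset.card_le_card ?_
  intro c hc
  simp only [Finset.mem_filter, Finset.mem_univ, true_and] at hc ⊢
  have := row_le_of_ss hT c.1.1 c.1.2 c.2
  have h2 : (T ⟨(c.1.1, c.1.2), c.2⟩ : ℕ) = T c := rfl
  omega

lemma row_lt {N : ℕ} {l : YoungDiagram} (h : l.colLen 0 ≤ N) (c : l.cells) : c.1.1 < N := by
  have h1 : (c.1.1, 0) ∈ l :=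
    l.up_left_mem le_rfl (Nat.zero_le _) ((YoungDiagram.mem_cells _).1 c.2)
  rw [YoungDiagram.mem_iff_lt_colLen] at h1
  omega

/-- the superstandard tableau -/
def superT {N : ℕ} (l : YoungDiagram) (h : l.colLen 0 ≤ N) : l.cells → Fin N :=
  fun c => ⟨c.1.1, row_lt h c⟩

lemma superT_ss {N : ℕ} (l : YoungDiagram) (h : l.colLen 0 ≤ N) :
    IsSemistandardOn l.cells (superT l h) := by
  constructor
  · intro i j h1 h2
    simp [superT]
  · intro i j h1 h2
    simp [superT]

lemma coeff_superT {N : ℕ} (l : YoungDiagram) (h : l.colLen 0 ≤ N) :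
    coeff (content (superT l h)) (schurPoly N l) ≠ 0 := by
  classical
  rw [coeff_schur]
  rw [Nat.cast_ne_zero, Finset.card_ne_zero]
  exact ⟨superT l h, by simp [superT_ss]⟩

lemma superT_card {N : ℕ} (l : YoungDiagram) (h : l.colLen 0 ≤ N) (m : ℕ) :
    (Finset.univ.filter (fun c => (superT l h c : ℕ) < m)).card = rowHead l m := by
  unfold rowHead
  rw [← card_attach_filter]
  rfl

lemma pick (s : Finset YoungDiagram) (f : YoungDiagram → ℕ → ℕ) (hf : Function.Injective f)
    {mu : YoungDiagram} (hmu : mu ∈ s) :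
    ∃ nu ∈ s, f mu ≤ f nu ∧ ∀ l ∈ s, f nu ≤ f l → l = nu := by
  classical
  obtain ⟨nu, h1, h2⟩ := Finset.exists_maximalFor f (s.filter (fun l => f mu ≤ f l))
    ⟨mu, by simp [hmu]⟩
  simp only [Finset.mem_filter] at h1 h2
  refine ⟨nu, h1.1, h1.2, fun l hl hle => ?_⟩
  exact hf (le_antisymm (h2 ⟨hl, h1.2.trans hle⟩ hle) hle)

lemma part1 {n : ℕ} (hn : 0 < n) (lam : YoungDiagram) (N : ℕ)
    (co : YoungDiagram →₀ ℤ)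
    (hrows : ∀ l ∈ co.support, l.colLen 0 ≤ N)
    (hexp : pleth n N (schurPoly N lam) = ∑ l ∈ co.support, co l • schurPoly N l)
    (mu : YoungDiagram) (hmu : mu ∈ co.support) :
    mu.cells.card = n * lam.cells.card ∧ ∀ r, rowHead mu r ≤ n * rowHead lam r := by
  classical
  obtain ⟨nu, hnu, hle, hmax⟩ := pick (co.support.filter (fun l => l.cells.card = mu.cells.card))
    rowHead rowHead_injective (mu := mu) (by
      rw [Finset.mem_filter]; exact ⟨hmu, rfl⟩)
  rw [Finset.mem_filter] at hnu
  have hN := hrows nu hnu.1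
  have hc : coeff (content (superT nu hN)) (pleth n N (schurPoly N lam)) ≠ 0 := by
    rw [hexp, coeff_sum, Finset.sum_eq_single nu]
    · rw [coeff_smul, smul_eq_mul]
      exact mul_ne_zero (Finsupp.mem_support_iff.1 hnu.1) (coeff_superT nu hN)
    · intro l hl hne
      rw [coeff_smul, smul_eq_mul]
      by_contra hcon
      obtain ⟨T, hT, hcT⟩ := exists_of_coeff_schur (right_ne_zero_of_mul hcon)
      apply hne
      apply hmax
      · rw [Finset.mem_filter]
        refine ⟨hl, ?_⟩
        rw [card_eq_content T, hcT, ← card_eq_content, hnu.2]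
      · intro m
        rw [← superT_card nu hN, card_lt_eq, ← hcT, ← card_lt_eq]
        exact card_lt_le_rowHead hT m
    · intro h; exact absurd hnu.1 h
  obtain ⟨m', hm', hc'⟩ := exists_of_coeff_pleth hn hc
  obtain ⟨T, hT, rfl⟩ := exists_of_coeff_schur hc'
  constructor
  · rw [← hnu.2, card_eq_content (superT nu hN), hm', card_eq_content T, Finset.mul_sum]
    simp
  · intro r
    refine (hle r).trans ?_
    rw [← superT_card nu hN, card_lt_eq, hm']
    have := card_lt_le_rowHead hT r
    rw [card_lt_eq] at this
    simp only [Finsupp.smul_apply, smul_eq_mul, ← Finset.mul_sum]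
    exact Nat.mul_le_mul_left n this

/-- column of the `j`-th cell -/
def colAt {s : Finset (ℕ × ℕ)} {d : ℕ} (P : s ≃ Fin d) (j : ℕ) : ℕ :=
  if h : j < d then (P.symm ⟨j, h⟩).1.2 else 0

lemma colAt_apply {s : Finset (ℕ × ℕ)} {d : ℕ} (P : s ≃ Fin d) (c : s) :
    colAt P (P c) = c.1.2 := by
  simp [colAt]

/-- standard bijective fillings -/
def IsStd (s : Finset (ℕ × ℕ)) {d : ℕ} (P : s ≃ Fin d) : Prop :=
  (∀ (i j : ℕ) (h1 : (i, j) ∈ s) (h2 : (i, j + 1) ∈ s),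
      P ⟨(i, j), h1⟩ < P ⟨(i, j + 1), h2⟩) ∧
  (∀ (i j : ℕ) (h1 : (i, j) ∈ s) (h2 : (i + 1, j) ∈ s),
      P ⟨(i, j), h1⟩ < P ⟨(i + 1, j), h2⟩)

/-- descent set -/
def des {s : Finset (ℕ × ℕ)} {d : ℕ} (P : s ≃ Fin d) : Finset ℕ :=
  (Finset.Ico 1 d).filter (fun j => colAt P j ≤ colAt P (j - 1))

lemma run_le (f : ℕ → ℕ) (p q : ℕ) (hpq : p ≤ q)
    (h : ∀ j, p < j → j ≤ q → f j ≤ f (j - 1)) : f q ≤ f p := by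
  induction q, hpq using Nat.le_induction with
  | base => exact le_rfl
  | succ q hq ih =>
    have h1 := h (q + 1) (by omega) le_rfl
    have h2 := ih (fun j hj hj' => h j hj (by omega))
    simp only [Nat.add_sub_cancel] at h1
    omega

lemma run_lt (f : ℕ → ℕ) (p q : ℕ) (hpq : p < q)
    (h : ∀ j, p < j → j ≤ q → f (j - 1) < f j) : f p < f q := by
  induction q, hpq using Nat.le_induction with
  | base => exact h (p + 1) (by omega) le_rfl
  | succ q hq ih =>
    have h1 := h (q + 1) (by omega) le_rfl
    have h2 := ih (fun j hj hj' => h j hj (by omega))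
    simp only [Nat.add_sub_cancel] at h1
    omega

lemma col_bound {l : YoungDiagram} {d : ℕ} {P : l.cells ≃ Fin d} (hP : IsStd l.cells P)
    (B : Finset ℕ) (hB : ∀ j, 1 ≤ j → j < d → j ∈ B ∨ j ∈ des P) :
    ∀ (j i : ℕ) (h : (i, j) ∈ l.cells),
      j ≤ (B.filter (fun b => b ≤ (P ⟨(i, j), h⟩ : ℕ))).card := by
  intro j
  induction j with
  | zero => intros; omega
  | succ j ih =>
    intro i h
    have h' : (i, j) ∈ l.cells := by
      rw [YoungDiagram.mem_cells] at h ⊢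
      exact l.up_left_mem le_rfl (by omega) h
    have h1 := ih i h'
    have h2 := hP.1 i j h' h
    rw [Fin.lt_def] at h2
    have h3 : ∃ b ∈ B, (P ⟨(i, j), h'⟩ : ℕ) < b ∧ b ≤ (P ⟨(i, j + 1), h⟩ : ℕ) := by
      by_contra hcon
      push Not at hcon
      have := run_le (colAt P) _ _ h2.le (by
        intro k hk hk'
        rcases hB k (by omega) (lt_of_le_of_lt hk' (Fin.is_lt _)) with hb | hb
        · exact absurd hk' (not_le.2 (hcon k hb hk))
        · exact (Finset.mem_filter.1 hb).2)
      rw [colAt_apply, colAt_apply] at this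
      simp at this
    obtain ⟨b, hb, hb1, hb2⟩ := h3
    refine lt_of_le_of_lt h1 (Finset.card_lt_card ?_)
    rw [Finset.ssubset_iff_of_subset]
    · refine ⟨b, by simp [hb, hb2], by simp [hb, hb1]⟩
    · intro x hx
      simp only [Finset.mem_filter] at hx ⊢
      exact ⟨hx.1, by omega⟩

lemma le_colHead {l : YoungDiagram} {d : ℕ} {P : l.cells ≃ Fin d} (hP : IsStd l.cells P)
    (B : Finset ℕ) (hB : ∀ j, 1 ≤ j → j < d → j ∈ B ∨ j ∈ des P) (c t : ℕ) (ht : t ≤ d)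
    (hc : (B.filter (fun b => b < t)).card < c) : t ≤ colHead l c := by
  unfold colHead
  rw [← card_attach_filter]
  have h1 : (Finset.univ.filter (fun p : Fin d => (p : ℕ) < t)).card = t := by
    rw [Fin.card_filter_val_lt]; omega
  rw [← h1]
  refine Finset.card_le_card_of_injOn P.symm ?_ P.symm.injective.injOn
  intro p hp
  simp only [Finset.coe_filter, Finset.mem_univ, true_and, Set.mem_ofPred_eq] at hp ⊢
  have h2 := col_bound hP B hB (P.symm p).1.2 (P.symm p).1.1 (P.symm p).2
  have h3 : P ⟨((P.symm p).1.1, (P.symm p).1.2), (P.symm p).2⟩ = p := P.apply_symm_apply p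
  rw [h3] at h2
  refine lt_of_le_of_lt (h2.trans (Finset.card_le_card ?_)) hc
  intro x hx
  simp only [Finset.mem_filter] at hx ⊢
  exact ⟨hx.1, by omega⟩

/-- the weakly increasing word attached to a set of positions -/
def wv (S : Finset ℕ) (i : ℕ) : ℕ := (S.filter (fun b => b ≤ i)).card

lemma wv_mono (S : Finset ℕ) : Monotone (wv S) := by
  intro i j h
  refine Finset.card_le_card ?_
  intro x hx
  simp only [Finset.mem_filter] at hx ⊢
  exact ⟨hx.1, by omega⟩

lemma wv_lt {S : Finset ℕ} {i j b : ℕ} (hb : b ∈ S) (h1 : i < b) (h2 : b ≤ j) :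
    wv S i < wv S j := by
  refine Finset.card_lt_card ?_
  rw [Finset.ssubset_iff_of_subset]
  · refine ⟨b, by simp [hb, h2], by simp [hb, h1]⟩
  · intro x hx
    simp only [Finset.mem_filter] at hx ⊢
    exact ⟨hx.1, by omega⟩

lemma wv_pred {S : Finset ℕ} {j : ℕ} (hj : j ∉ S) : wv S (j - 1) = wv S j := by
  unfold wv
  congr 1
  ext x
  simp only [Finset.mem_filter]
  refine and_congr_right fun hx => ?_
  have : x ≠ j := fun h => hj (h ▸ hx)
  omega

lemma wv_bound {S : Finset ℕ} {d i : ℕ} (hS : S ⊆ Finset.Ico 1 d) (hi : i < d) : wv S i < d := by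
  have h1 : wv S i ≤ S.card := Finset.card_filter_le _ _
  have h2 := Finset.card_le_card hS
  simp at h2
  omega

/-- the exponent attached to a set of positions -/
noncomputable def eS (N d : ℕ) (S : Finset ℕ) : Fin N →₀ ℕ :=
  Finsupp.equivFunOnFinite.symm
    (fun v => ((Finset.range d).filter (fun i => wv S i = (v : ℕ))).card)

lemma eS_apply (N d : ℕ) (S : Finset ℕ) (v : Fin N) :
    eS N d S v = ((Finset.range d).filter (fun i => wv S i = (v : ℕ))).card := rfl

lemma eS_sum {N d : ℕ} {S : Finset ℕ} (hS : S ⊆ Finset.Ico 1 d) (hd : d ≤ N) (m : ℕ) :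
    ∑ v ∈ Finset.univ.filter (fun v : Fin N => (v : ℕ) < m), eS N d S v =
      ((Finset.range d).filter (fun i => wv S i < m)).card := by
  symm
  have : ((Finset.range d).filter (fun i => wv S i < m)).card =
    ∑ v ∈ (Finset.range N).filter (fun v => v < m),
      ((Finset.range d).filter (fun i => wv S i = v)).card := by
    rw [Finset.card_eq_sum_card_fiberwise (f := wv S) (t := (Finset.range N).filter (fun v => v < m))]
    · refine Finset.sum_congr rfl fun v hv => ?_
      rw [Finset.filter_filter]
      congr 1
      ext i
      simp only [Finset.mem_filter] at hv ⊢
      constructor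
      · exact fun h => ⟨h.1, h.2.2⟩
      · rintro ⟨h, rfl⟩; exact ⟨h, hv.2, rfl⟩
    · intro i hi
      simp only [Finset.coe_filter, Finset.mem_range, Set.mem_ofPred_eq] at hi ⊢
      exact ⟨(wv_bound hS hi.1).trans_le hd, hi.2⟩
  rw [this, Finset.sum_filter, Finset.sum_range, Finset.sum_filter]
  rfl

lemma mono_lt_iff {d : ℕ} {f : Fin d → ℕ} (hf : Monotone f) (i : Fin d) (m : ℕ) :
    f i < m ↔ (i : ℕ) < (Finset.univ.filter (fun j => f j < m)).card := by
  constructor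
  · intro h
    have : Finset.Iic i ⊆ Finset.univ.filter (fun j => f j < m) := by
      intro j hj
      simp only [Finset.mem_Iic, Finset.mem_filter, Finset.mem_univ, true_and] at hj ⊢
      exact (hf hj).trans_lt h
    have := Finset.card_le_card this
    rw [Fin.card_Iic] at this
    omega
  · intro h
    by_contra hcon
    have : Finset.univ.filter (fun j => f j < m) ⊆ Finset.Iio i := by
      intro j hj
      simp only [Finset.mem_Iio, Finset.mem_filter, Finset.mem_univ, true_and] at hj ⊢
      by_contra hc
      have := hf (not_lt.1 hc)
      omega
    have := Finset.card_le_card this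
    rw [Fin.card_Iio] at this
    omega

lemma mono_unique {d : ℕ} {f g : Fin d → ℕ} (hf : Monotone f) (hg : Monotone g)
    (h : ∀ m, (Finset.univ.filter (fun j => f j < m)).card =
      (Finset.univ.filter (fun j => g j < m)).card) : f = g := by
  funext i
  have key : ∀ m, f i < m ↔ g i < m := by
    intro m
    rw [mono_lt_iff hf, mono_lt_iff hg, h]
  have h1 := (key (f i + 1)).1 (by omega)
  have h2 := (key (g i + 1)).2 (by omega)
  omega

lemma card_range_filter (d : ℕ) (p : ℕ → Prop) [DecidablePred p] :
    (Finset.univ.filter (fun i : Fin d => p i)).card = ((Finset.range d).filter p).card := by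
  rw [Finset.card_filter, Finset.card_filter, Finset.sum_range]

/-- the tableau attached to a standard filling and a set of positions -/
def tabOf {N d : ℕ} {s : Finset (ℕ × ℕ)} {S : Finset ℕ} (hS : S ⊆ Finset.Ico 1 d) (hd : d ≤ N)
    (P : s ≃ Fin d) : s → Fin N :=
  fun c => ⟨wv S (P c), (wv_bound hS (P c).2).trans_le hd⟩

lemma tabOf_content {N d : ℕ} {s : Finset (ℕ × ℕ)} {S : Finset ℕ} (hS : S ⊆ Finset.Ico 1 d)
    (hd : d ≤ N) (P : s ≃ Fin d) : content (tabOf hS hd P) = eS N d S := by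
  ext v
  rw [content_apply, eS_apply, ← card_range_filter]
  refine Finset.card_bij (fun c _ => P c) ?_ ?_ ?_
  · intro c hc
    simpa [tabOf, Fin.ext_iff] using hc
  · intro a _ b _ h
    exact P.injective h
  · intro b hb
    exact ⟨P.symm b, by simpa [tabOf, Fin.ext_iff] using hb, by simp⟩

lemma col_lt_of_wv_eq {d : ℕ} {s : Finset (ℕ × ℕ)} {S : Finset ℕ}
    {P : s ≃ Fin d} (hdes : des P ⊆ S) {a b : s} (hab : P a < P b)
    (hw : wv S (P a) = wv S (P b)) : a.1.2 < b.1.2 := by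
  rw [← colAt_apply P a, ← colAt_apply P b]
  refine run_lt (colAt P) _ _ hab ?_
  intro j hj hj'
  have h1 : j ∉ S := fun hjS => (wv_lt hjS hj hj').ne hw
  have h2 : j ∉ des P := fun h => h1 (hdes h)
  by_contra hc
  apply h2
  simp only [des, Finset.mem_filter, Finset.mem_Ico]
  have := (P b).2
  exact ⟨⟨by omega, by omega⟩, by omega⟩

lemma tabOf_ss {N d : ℕ} {s : Finset (ℕ × ℕ)} {S : Finset ℕ} (hS : S ⊆ Finset.Ico 1 d)
    (hd : d ≤ N) {P : s ≃ Fin d} (hP : IsStd s P) (hdes : des P ⊆ S) :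
    IsSemistandardOn s (tabOf hS hd P) := by
  constructor
  · intro i j h1 h2
    have := hP.1 i j h1 h2
    exact wv_mono S (Fin.lt_def.1 this).le
  · intro i j h1 h2
    have := hP.2 i j h1 h2
    rw [Fin.lt_def]
    refine lt_of_le_of_ne (wv_mono S (Fin.lt_def.1 this).le) fun heq => ?_
    have := col_lt_of_wv_eq hdes this heq
    simp at this

lemma tabOf_inj {N d : ℕ} {s : Finset (ℕ × ℕ)} {S : Finset ℕ} (hS : S ⊆ Finset.Ico 1 d)
    (hd : d ≤ N) {P Q : s ≃ Fin d} (hP : des P ⊆ S) (hQ : des Q ⊆ S)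
    (h : tabOf hS hd P = tabOf hS hd Q) : P = Q := by
  have hw : ∀ c, wv S (P c) = wv S (Q c) := fun c => by
    have := congrFun h c
    simpa [tabOf, Fin.ext_iff] using this
  have hlt : ∀ a b, P a < P b → Q a < Q b := by
    intro a b hab
    by_contra hc
    have hne : Q b ≠ Q a := fun he => by
      rw [Q.injective he] at hab; exact lt_irrefl _ hab
    have hba : Q b < Q a := lt_of_le_of_ne (not_lt.1 hc) hne
    have h1 : wv S (P a) ≤ wv S (P b) := wv_mono S (Fin.lt_def.1 hab).le
    have h2 : wv S (Q b) ≤ wv S (Q a) := wv_mono S (Fin.lt_def.1 hba).le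
    have h3 := hw a
    have h4 := hw b
    have h5 := col_lt_of_wv_eq hP hab (by omega)
    have h6 := col_lt_of_wv_eq hQ hba (by omega)
    omega
  have hsm : StrictMono (P.symm.trans Q) := by
    intro x y hxy
    exact hlt _ _ (by simpa using hxy)
  have hid : (P.symm.trans Q : Fin d → Fin d) = id := by
    have h1 : (fun x => ((P.symm.trans Q x : Fin d) : ℕ)) = fun x : Fin d => (x : ℕ) := by
      refine mono_unique (fun x y h => Fin.le_def.1 (hsm.monotone h)) (fun x y h => h) ?_
      intro m
      refine Finset.card_bij (fun x _ => P.symm.trans Q x) ?_ ?_ ?_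
      · intro c hc
        exact Finset.mem_filter.2 ⟨Finset.mem_univ _, (Finset.mem_filter.1 hc).2⟩
      · intro a _ b _ h; exact (P.symm.trans Q).injective h
      · intro b hb
        refine ⟨(P.symm.trans Q).symm b, Finset.mem_filter.2 ⟨Finset.mem_univ _, ?_⟩, by simp⟩
        rw [Equiv.apply_symm_apply]
        exact (Finset.mem_filter.1 hb).2
    funext x
    exact Fin.ext (congrFun h1 x)
  ext c
  have := congrFun hid (P c)
  simp at this
  rw [this]

lemma ss_col_lt {N : ℕ} {l : YoungDiagram} {T : l.cells → Fin N}
    (hT : IsSemistandardOn l.cells T) (j i : ℕ) (h : (i, j) ∈ l.cells) (k : ℕ) :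
    ∀ (h' : (i + k + 1, j) ∈ l.cells), T ⟨(i, j), h⟩ < T ⟨(i + k + 1, j), h'⟩ := by
  induction k with
  | zero => intro h'; exact hT.2 i j h h'
  | succ k ih =>
    intro h'
    have h'' : (i + k + 1, j) ∈ l.cells := by
      rw [YoungDiagram.mem_cells] at h' ⊢
      exact l.up_left_mem (by omega) le_rfl h'
    exact (ih h'').trans (hT.2 (i + k + 1) j h'' h')

lemma key_inj {N : ℕ} {l : YoungDiagram} {T : l.cells → Fin N}
    (hT : IsSemistandardOn l.cells T) :
    Function.Injective (fun c : l.cells => toLex (T c, c.1.2)) := by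
  rintro ⟨⟨i, j⟩, h⟩ ⟨⟨i', j'⟩, h'⟩ heq
  have h1 := congrArg (fun x => (ofLex x).1) heq
  have h2 := congrArg (fun x => (ofLex x).2) heq
  simp only [ofLex_toLex] at h1 h2
  subst h2
  rcases lt_trichotomy i i' with hlt | rfl | hlt
  · obtain ⟨k, rfl⟩ := Nat.exists_eq_add_of_lt hlt
    exact absurd h1 (ss_col_lt hT j i h k h').ne
  · rfl
  · obtain ⟨k, rfl⟩ := Nat.exists_eq_add_of_lt hlt
    exact absurd h1 (ss_col_lt hT j i' h' k h).ne'

lemma exists_order {α κ : Type*} [Fintype α] [LinearOrder κ] (key : α → κ)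
    (hk : Function.Injective key) {d : ℕ} (hd : Fintype.card α = d) :
    ∃ P : α ≃ Fin d, ∀ a b, P a < P b ↔ key a < key b := by
  let _ : LinearOrder α := LinearOrder.lift' key hk
  refine ⟨(Fintype.orderIsoFinOfCardEq α hd).symm.toEquiv, fun a b => ?_⟩
  exact (Fintype.orderIsoFinOfCardEq α hd).symm.lt_iff_lt

lemma tabOf_surj {N d : ℕ} {l : YoungDiagram} {S : Finset ℕ} (hS : S ⊆ Finset.Ico 1 d)
    (hd : d ≤ N) (hl : l.cells.card = d) {T : l.cells → Fin N}
    (hT : IsSemistandardOn l.cells T) (hc : content T = eS N d S) :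
    ∃ P : l.cells ≃ Fin d, IsStd l.cells P ∧ des P ⊆ S ∧ tabOf hS hd P = T := by
  obtain ⟨P, hP⟩ := exists_order _ (key_inj hT) (d := d) (by simpa using hl)
  have hP' : ∀ a b, P a < P b ↔ (T a < T b ∨ T a = T b ∧ a.1.2 < b.1.2) := by
    intro a b
    rw [hP, Prod.Lex.lt_iff]
    rfl
  have hmono : Monotone (fun i => (T (P.symm i) : ℕ)) := by
    intro i j hij
    rcases hij.lt_or_eq with h | h
    · have := (hP' (P.symm i) (P.symm j)).1 (by simpa using h)
      rcases this with h | h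
      · exact (Fin.lt_def.1 h).le
      · exact (congrArg Fin.val h.1).le
    · rw [h]
  have heq : (fun i => (T (P.symm i) : ℕ)) = fun i : Fin d => wv S i := by
    refine mono_unique hmono (fun i j h => wv_mono S h) ?_
    intro m
    rw [card_range_filter d (fun i => wv S i < m), ← eS_sum hS hd, ← hc, ← card_lt_eq]
    refine Finset.card_bij (fun c _ => P.symm c) ?_ ?_ ?_
    · intro c hc; simpa using hc
    · intro a _ b _ h; exact P.symm.injective h
    · intro b hb
      exact ⟨P b, by simpa using hb, by simp⟩
  have hw : ∀ c, wv S (P c) = T c := by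
    intro c
    have := congrFun heq (P c)
    simpa using this.symm
  refine ⟨P, ⟨?_, ?_⟩, ?_, ?_⟩
  · intro i j h1 h2
    rw [hP']
    rcases (hT.1 i j h1 h2).lt_or_eq with h | h
    · exact Or.inl h
    · exact Or.inr ⟨h, by simp⟩
  · intro i j h1 h2
    rw [hP']
    exact Or.inl (hT.2 i j h1 h2)
  · intro j hj
    simp only [des, Finset.mem_filter, Finset.mem_Ico] at hj
    by_contra hjS
    have h1 := wv_pred hjS
    have hjd : j < d := hj.1.2
    have hjd' : j - 1 < d := by omega
    set a := P.symm ⟨j - 1, hjd'⟩ with ha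
    set b := P.symm ⟨j, hjd⟩ with hb
    have hPa : P a = ⟨j - 1, hjd'⟩ := by simp [ha]
    have hPb : P b = ⟨j, hjd⟩ := by simp [hb]
    have hab : P a < P b := by rw [hPa, hPb, Fin.lt_def]; simp; omega
    have hTe : T a = T b := by
      apply Fin.ext
      rw [← hw, ← hw, hPa, hPb]
      exact h1
    have h2 := colAt_apply P a
    have h3 := colAt_apply P b
    rw [hPa] at h2
    rw [hPb] at h3
    simp only at h2 h3
    rcases (hP' a b).1 hab with h | h
    · exact absurd hTe h.ne
    · omega
  · funext c
    exact Fin.ext (hw c)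

open scoped Classical in
lemma coeff_eS {N d : ℕ} {l : YoungDiagram} {S : Finset ℕ} (hS : S ⊆ Finset.Ico 1 d)
    (hd : d ≤ N) (hl : l.cells.card = d) :
    coeff (eS N d S) (schurPoly N l) =
      ((Finset.univ.filter (fun P : l.cells ≃ Fin d => IsStd l.cells P ∧ des P ⊆ S)).card : ℤ) := by
  rw [coeff_schur]
  congr 1
  symm
  refine Finset.card_bij (fun P _ => tabOf hS hd P) ?_ ?_ ?_
  · intro P hP
    simp only [Finset.mem_filter, Finset.mem_univ, true_and] at hP ⊢
    exact ⟨tabOf_ss hS hd hP.1 hP.2, tabOf_content hS hd P⟩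
  · intro P hP Q hQ h
    simp only [Finset.mem_filter, Finset.mem_univ, true_and] at hP hQ
    exact tabOf_inj hS hd hP.2 hQ.2 h
  · intro T hT
    simp only [Finset.mem_filter, Finset.mem_univ, true_and] at hT
    obtain ⟨P, h1, h2, h3⟩ := tabOf_surj hS hd hl hT.1 hT.2
    exact ⟨P, by simp [h1, h2], h3⟩

lemma signed_sum (A U : Finset ℕ) (hAU : A ⊆ U) :
    ∑ S ∈ U.powerset.filter (fun S => A ⊆ S), (-1 : ℤ) ^ S.card =
      if A = U then (-1) ^ U.card else 0 := by
  split_ifs with h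
  · subst h
    have : A.powerset.filter (fun S => A ⊆ S) = {A} := by
      ext S
      simp only [Finset.mem_filter, Finset.mem_powerset, Finset.mem_singleton]
      constructor
      · exact fun h => Finset.Subset.antisymm h.1 h.2
      · rintro rfl; exact ⟨Finset.Subset.refl _, Finset.Subset.refl _⟩
    rw [this, Finset.sum_singleton]
  · have : ∃ j ∈ U, j ∉ A := by
      by_contra hc
      push Not at hc
      exact h (Finset.Subset.antisymm hAU hc)
    obtain ⟨j, hjU, hjA⟩ := this
    refine Finset.sum_involution
      (fun S _ => if j ∈ S then S.erase j else insert j S) ?_ ?_ ?_ ?_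
    · intro S _
      split_ifs with hj
      · have := Finset.card_erase_add_one hj
        rw [← this, pow_succ]; ring
      · rw [Finset.card_insert_of_notMem hj, pow_succ]; ring
    · intro S _ _
      split_ifs with hj
      · intro he; rw [← he] at hj; simp at hj
      · intro he; rw [← he] at hj; simp at hj
    · intro S hS
      simp only [Finset.mem_filter, Finset.mem_powerset] at hS ⊢
      split_ifs with hj
      · refine ⟨(Finset.erase_subset _ _).trans hS.1, ?_⟩
        intro x hx
        exact Finset.mem_erase.2 ⟨fun he => hjA (he ▸ hx), hS.2 hx⟩
      · exact ⟨Finset.insert_subset hjU hS.1, hS.2.trans (Finset.subset_insert _ _)⟩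
    · intro S _
      by_cases hj : j ∈ S
      · simp [hj]
      · simp [hj]

/-- pairing with a product of elementary symmetric functions -/
noncomputable def phi (N d : ℕ) (B : Finset ℕ) (f : MvPolynomial (Fin N) ℤ) : ℤ :=
  ∑ S ∈ (Finset.Ico 1 d).powerset.filter (fun S => B ⊆ S),
    (-1 : ℤ) ^ S.card * coeff (eS N d S) f

open scoped Classical in
lemma phi_schur {N d : ℕ} {l : YoungDiagram} {B : Finset ℕ} (hB : B ⊆ Finset.Ico 1 d)
    (hd : d ≤ N) (hl : l.cells.card = d) :
    phi N d B (schurPoly N l) = (-1) ^ (Finset.Ico 1 d).card *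
      ((Finset.univ.filter (fun P : l.cells ≃ Fin d =>
        IsStd l.cells P ∧ B ∪ des P = Finset.Ico 1 d)).card : ℤ) := by
  unfold phi
  have h1 : ∀ S ∈ (Finset.Ico 1 d).powerset.filter (fun S => B ⊆ S),
      (-1 : ℤ) ^ S.card * coeff (eS N d S) (schurPoly N l) =
      ∑ P ∈ Finset.univ.filter (fun P : l.cells ≃ Fin d => IsStd l.cells P),
        if des P ⊆ S then (-1 : ℤ) ^ S.card else 0 := by
    intro S hS
    simp only [Finset.mem_filter, Finset.mem_powerset] at hS
    rw [coeff_eS hS.1 hd hl, ← Finset.filter_filter, Finset.card_filter]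
    push_cast
    rw [Finset.mul_sum]
    refine Finset.sum_congr rfl fun P _ => ?_
    simp
  rw [Finset.sum_congr rfl h1, Finset.sum_comm, ← Finset.filter_filter, Finset.card_filter]
  push_cast
  rw [Finset.mul_sum]
  refine Finset.sum_congr rfl fun P _ => ?_
  have hsub : B ∪ des P ⊆ Finset.Ico 1 d :=
    Finset.union_subset hB (Finset.filter_subset _ _)
  have h2 := signed_sum _ _ hsub
  rw [← Finset.sum_filter, Finset.filter_filter]
  have h3 : (Finset.Ico 1 d).powerset.filter (fun S => B ⊆ S ∧ des P ⊆ S) =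
      (Finset.Ico 1 d).powerset.filter (fun S => B ∪ des P ⊆ S) := by
    refine Finset.filter_congr fun S _ => ?_
    exact Finset.union_subset_iff.symm
  rw [h3, h2]
  simp

lemma exists_of_phi {N d : ℕ} {l : YoungDiagram} {B : Finset ℕ} (hB : B ⊆ Finset.Ico 1 d)
    (hd : d ≤ N) (hl : l.cells.card = d) (h : phi N d B (schurPoly N l) ≠ 0) :
    ∃ P : l.cells ≃ Fin d, IsStd l.cells P ∧ ∀ j, 1 ≤ j → j < d → j ∈ B ∨ j ∈ des P := by
  classical
  rw [phi_schur hB hd hl] at h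
  have h' := Nat.cast_ne_zero.1 (right_ne_zero_of_mul h)
  rw [Finset.card_ne_zero] at h'
  obtain ⟨P, hP⟩ := h'
  simp only [Finset.mem_filter, Finset.mem_univ, true_and] at hP
  refine ⟨P, hP.1, fun j h1 h2 => ?_⟩
  rw [← Finset.mem_union, hP.2, Finset.mem_Ico]
  exact ⟨h1, h2⟩

lemma eS_dvd {N d n : ℕ} {S : Finset ℕ} (hS : S ⊆ Finset.Ico 1 d) (hd : d ≤ N)
    (h : ∀ v, n ∣ eS N d S v) {j : ℕ} (hj : j ∈ S) : n ∣ j := by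
  have h1 : ((Finset.range d).filter (fun i => wv S i < wv S j)) = Finset.range j := by
    have hjd := (Finset.mem_Ico.1 (hS hj)).2
    ext i
    simp only [Finset.mem_filter, Finset.mem_range]
    constructor
    · rintro ⟨_, h2⟩
      by_contra hc
      exact absurd (wv_mono S (not_lt.1 hc)) (not_le.2 h2)
    · intro hi
      exact ⟨by omega, wv_lt hj hi le_rfl⟩
  have h2 := eS_sum hS hd (wv S j)
  rw [h1, Finset.card_range] at h2
  rw [← h2]
  exact Finset.dvd_sum fun v _ => h v

lemma sum_div (n : ℕ) (hn : 0 < n) (f : ℕ → ℕ) (D : ℕ) :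
    ∑ i ∈ Finset.range (n * D), f (i / n) = n * ∑ i ∈ Finset.range D, f i := by
  induction D with
  | zero => simp
  | succ D ih =>
    rw [mul_add, mul_one, Finset.sum_range_add, ih, Finset.sum_range_succ, mul_add]
    congr 1
    rw [Finset.sum_congr rfl (g := fun _ => f D)]
    · simp
    · intro i hi
      rw [Finset.mem_range] at hi
      rw [Nat.mul_add_div hn, Nat.div_eq_of_lt hi, add_zero]

lemma wv_image (n : ℕ) (hn : 0 < n) (S : Finset ℕ) (i : ℕ) :
    wv (S.image (fun j => n * j)) i = wv S (i / n) := by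
  unfold wv
  rw [Finset.filter_image, Finset.card_image_of_injective]
  · congr 1
    refine Finset.filter_congr fun x _ => ?_
    rw [Nat.le_div_iff_mul_le hn, mul_comm]
  · intro a b h
    exact Nat.eq_of_mul_eq_mul_left hn h

lemma eS_image (N n D : ℕ) (hn : 0 < n) (S : Finset ℕ) :
    eS N (n * D) (S.image (fun j => n * j)) = n • eS N D S := by
  ext v
  rw [Finsupp.smul_apply, smul_eq_mul, eS_apply, eS_apply, Finset.card_filter, Finset.card_filter,
    ← sum_div n hn (fun i => if wv S i = (v : ℕ) then 1 else 0)]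
  simp only [wv_image n hn]

lemma phi_pleth {N n D : ℕ} (hn : 0 < n) (hd : n * D ≤ N) {B : Finset ℕ}
    (hB : B ⊆ Finset.Ico 1 (n * D)) (f : MvPolynomial (Fin N) ℤ)
    (h : phi N (n * D) B (pleth n N f) ≠ 0) :
    (∀ b ∈ B, n ∣ b) ∧ phi N D ((Finset.Ico 1 D).filter (fun j => n * j ∈ B)) f ≠ 0 := by
  have hdvd : ∀ S ∈ (Finset.Ico 1 (n * D)).powerset, 
      coeff (eS N (n * D) S) (pleth n N f) ≠ 0 → ∀ j ∈ S, n ∣ j := by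
    intro S hS hne j hj
    obtain ⟨m', hm', -⟩ := exists_of_coeff_pleth hn hne
    refine eS_dvd (Finset.mem_powerset.1 hS) hd ?_ hj
    intro v
    rw [hm']
    simp
  have hBd : ∀ b ∈ B, n ∣ b := by
    obtain ⟨S, hS, hne⟩ := Finset.exists_ne_zero_of_sum_ne_zero h
    rw [Finset.mem_filter] at hS
    intro b hb
    exact hdvd S hS.1 (right_ne_zero_of_mul hne) b (hS.2 hb)
  refine ⟨hBd, ?_⟩
  convert h using 1
  have hinj : Function.Injective (fun j => n * j) := fun a b h => Nat.eq_of_mul_eq_mul_left hn h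
  unfold phi
  refine Finset.sum_of_injOn (fun S => S.image (fun j => n * j)) ?_ ?_ ?_ ?_
  · exact (Finset.image_injective hinj).injOn
  · intro S hS
    simp only [Finset.coe_filter, Finset.mem_powerset, Set.mem_ofPred_eq] at hS ⊢
    constructor
    · intro x hx
      obtain ⟨j, hj, rfl⟩ := Finset.mem_image.1 hx
      have := Finset.mem_Ico.1 (hS.1 hj)
      rw [Finset.mem_Ico]
      exact ⟨Nat.mul_pos hn this.1, Nat.mul_lt_mul_of_pos_left this.2 hn⟩
    · intro b hb
      obtain ⟨j, rfl⟩ := hBd b hb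
      refine Finset.mem_image.2 ⟨j, hS.2 ?_, rfl⟩
      have := Finset.mem_Ico.1 (hB hb)
      rw [Finset.mem_filter, Finset.mem_Ico]
      exact ⟨⟨Nat.pos_of_mul_pos_left this.1, Nat.lt_of_mul_lt_mul_left this.2⟩, hb⟩
  · intro S hS hnot
    simp only [Finset.mem_filter] at hS
    by_contra hne
    apply hnot
    have hj := hdvd S hS.1 (right_ne_zero_of_mul hne)
    have hSub := Finset.mem_powerset.1 hS.1
    refine ⟨(Finset.Ico 1 D).filter (fun j => n * j ∈ S), ?_, ?_⟩
    · simp only [Finset.coe_filter, Finset.mem_powerset, Set.mem_ofPred_eq]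
      refine ⟨Finset.filter_subset _ _, ?_⟩
      intro x hx
      rw [Finset.mem_filter] at hx ⊢
      exact ⟨hx.1, hS.2 hx.2⟩
    · ext x
      simp only [Finset.mem_image, Finset.mem_filter, Finset.mem_Ico]
      constructor
      · rintro ⟨j, hj, rfl⟩; exact hj.2
      · intro hx
        obtain ⟨j, rfl⟩ := hj x hx
        have := Finset.mem_Ico.1 (hSub hx)
        exact ⟨j, ⟨⟨Nat.pos_of_mul_pos_left this.1, Nat.lt_of_mul_lt_mul_left this.2⟩, hx⟩, rfl⟩
  · intro S _
    rw [Finset.card_image_of_injective _ hinj, eS_image N n D hn, coeff_pleth_smul N hn]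

lemma phi_sum {ι : Type*} (N d : ℕ) (B : Finset ℕ) (s : Finset ι) (a : ι → ℤ)
    (f : ι → MvPolynomial (Fin N) ℤ) :
    phi N d B (∑ i ∈ s, a i • f i) = ∑ i ∈ s, a i * phi N d B (f i) := by
  unfold phi
  simp only [coeff_sum, coeff_smul, smul_eq_mul, Finset.mul_sum]
  rw [Finset.sum_comm]
  refine Finset.sum_congr rfl fun i _ => Finset.sum_congr rfl fun S _ => ?_
  ring

lemma colHead_mono (l : YoungDiagram) : Monotone (colHead l) := by
  intro i j h
  refine Finset.card_le_card ?_
  intro x hx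
  simp only [Finset.mem_filter] at hx ⊢
  exact ⟨hx.1, by omega⟩

lemma colHead_zero (l : YoungDiagram) : colHead l 0 = 0 := by
  simp [colHead]

lemma colHead_le (l : YoungDiagram) (m : ℕ) : colHead l m ≤ l.cells.card :=
  Finset.card_filter_le _ _

/-- the boundaries between the columns -/
def bd (l : YoungDiagram) : Finset ℕ :=
  (Finset.Ico 1 l.cells.card).filter
    (fun j => j ∈ l.cells.image (fun c => colHead l c.2))

lemma bd_sub (l : YoungDiagram) : bd l ⊆ Finset.Ico 1 l.cells.card := Finset.filter_subset _ _

lemma exists_of_mem_bd {l : YoungDiagram} {j : ℕ} (h : j ∈ bd l) : ∃ k, colHead l k = j := by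
  have := (Finset.mem_filter.1 h).2
  obtain ⟨c, _, hc⟩ := Finset.mem_image.1 this
  exact ⟨_, hc⟩

lemma mem_bd_of (l : YoungDiagram) (m : ℕ) (h0 : colHead l m ≠ 0)
    (h1 : colHead l m ≠ l.cells.card) : colHead l m ∈ bd l := by
  have hle := colHead_le l m
  refine Finset.mem_filter.2 ⟨Finset.mem_Ico.2 ⟨by omega, by omega⟩, ?_⟩
  have : ∃ c ∈ l.cells, ¬ c.2 < m := by
    by_contra hc
    push Not at hc
    apply h1
    unfold colHead
    rw [Finset.filter_true_of_mem hc]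
  obtain ⟨c, hc, hm⟩ := this
  refine Finset.mem_image.2 ⟨(0, m), ?_, rfl⟩
  rw [YoungDiagram.mem_cells] at hc ⊢
  exact l.up_left_mem (Nat.zero_le _) (not_lt.1 hm) hc

lemma exists_col_reading {l : YoungDiagram} {d : ℕ} (hl : l.cells.card = d) :
    ∃ P : l.cells ≃ Fin d, IsStd l.cells P ∧ bd l ∪ des P = Finset.Ico 1 d := by
  have hinj : Function.Injective (fun c : l.cells => toLex (c.1.2, c.1.1)) := by
    rintro ⟨⟨i, j⟩, h⟩ ⟨⟨i', j'⟩, h'⟩ heq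
    have h1 := congrArg (fun x => (ofLex x).1) heq
    have h2 := congrArg (fun x => (ofLex x).2) heq
    simp only [ofLex_toLex] at h1 h2
    subst h1 h2
    rfl
  obtain ⟨P, hP⟩ := exists_order _ hinj (d := d) (by simpa using hl)
  have hP' : ∀ a b : l.cells, P a < P b ↔ (a.1.2 < b.1.2 ∨ a.1.2 = b.1.2 ∧ a.1.1 < b.1.1) := by
    intro a b
    rw [hP, Prod.Lex.lt_iff]
    rfl
  refine ⟨P, ⟨?_, ?_⟩, ?_⟩
  · intro i j h1 h2
    rw [hP']; simp
  · intro i j h1 h2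
    rw [hP']; simp
  · refine Finset.Subset.antisymm (Finset.union_subset (hl ▸ bd_sub l)
      (Finset.filter_subset _ _)) ?_
    intro j hj
    by_cases hdes : j ∈ des P
    · exact Finset.mem_union_right _ hdes
    refine Finset.mem_union_left _ ?_
    have hj' := Finset.mem_Ico.1 hj
    have hjd : j < d := hj'.2
    have hjd' : j - 1 < d := by omega
    set a := P.symm ⟨j - 1, hjd'⟩ with ha
    set b := P.symm ⟨j, hjd⟩ with hb
    have hPa : P a = ⟨j - 1, hjd'⟩ := by simp [ha]
    have hPb : P b = ⟨j, hjd⟩ := by simp [hb]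
    have h2 := colAt_apply P a
    have h3 := colAt_apply P b
    rw [hPa] at h2
    rw [hPb] at h3
    simp only at h2 h3
    have hlt : a.1.2 < b.1.2 := by
      by_contra hc
      apply hdes
      refine Finset.mem_filter.2 ⟨hj, by omega⟩
    have hcount : colHead l b.1.2 = j := by
      unfold colHead
      rw [← card_attach_filter]
      have h1 : (Finset.univ.filter (fun p : Fin d => (p : ℕ) < j)).card = j := by
        rw [Fin.card_filter_val_lt]; omega
      conv_rhs => rw [← h1]
      refine Finset.card_bij (fun c _ => P c) ?_ ?_ ?_
      · intro c hc
        simp only [Finset.mem_filter, Finset.mem_univ, true_and] at hc ⊢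
        have : P c < P b := (hP' c b).2 (Or.inl hc)
        rw [hPb] at this
        exact this
      · intro x _ y _ h; exact P.injective h
      · intro p hp
        simp only [Finset.mem_filter, Finset.mem_univ, true_and] at hp
        refine ⟨P.symm p, ?_, by simp⟩
        simp only [Finset.mem_filter, Finset.mem_univ, true_and]
        by_contra hc
        have : P a < P (P.symm p) := (hP' _ _).2 (Or.inl (by omega))
        rw [hPa, Equiv.apply_symm_apply, Fin.lt_def] at this
        simp only at this
        omega
    have := mem_bd_of l b.1.2 (by omega) (by omega)
    rwa [hcount] at this

lemma phi_bd_ne {N : ℕ} {l : YoungDiagram} {d : ℕ} (hd : d ≤ N) (hl : l.cells.card = d) :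
    phi N d (bd l) (schurPoly N l) ≠ 0 := by
  classical
  rw [phi_schur (hl ▸ bd_sub l) hd hl]
  refine mul_ne_zero (pow_ne_zero _ (by norm_num)) ?_
  rw [Nat.cast_ne_zero, Finset.card_ne_zero]
  obtain ⟨P, h1, h2⟩ := exists_col_reading hl
  exact ⟨P, by simp [h1, h2]⟩

/-- dominance extracted from the column boundaries -/
lemma dom_of_tab {n D : ℕ} (hn : 0 < n) {nu l : YoungDiagram} (hnu : nu.cells.card = n * D)
    (hdvd : ∀ b ∈ bd nu, n ∣ b) {P : l.cells ≃ Fin D} (hP : IsStd l.cells P)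
    (hB : ∀ j, 1 ≤ j → j < D →
      j ∈ (Finset.Ico 1 D).filter (fun j => n * j ∈ bd nu) ∨ j ∈ des P) (m : ℕ) :
    colHead nu m ≤ n * colHead l m := by
  have hdm : n ∣ colHead nu m := by
    by_cases h0 : colHead nu m = 0
    · rw [h0]; exact dvd_zero n
    by_cases h1 : colHead nu m = nu.cells.card
    · rw [h1, hnu]; exact dvd_mul_right _ _
    exact hdvd _ (mem_bd_of nu m h0 h1)
  obtain ⟨t, ht⟩ := hdm
  rcases Nat.eq_zero_or_pos m with rfl | hm
  · rw [colHead_zero]; exact Nat.zero_le _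
  rw [ht]
  refine Nat.mul_le_mul_left n (le_colHead hP _ hB m t ?_ ?_)
  · have := colHead_le nu m
    rw [ht, hnu] at this
    exact Nat.le_of_mul_le_mul_left this hn
  · have hsub : ((Finset.Ico 1 D).filter (fun j => n * j ∈ bd nu)).filter (fun b => b < t) ⊆
        (Finset.Ico 1 m).image (fun k => colHead nu k / n) := by
      intro j hj
      simp only [Finset.mem_filter, Finset.mem_Ico] at hj
      obtain ⟨k, hk⟩ := exists_of_mem_bd hj.1.2
      refine Finset.mem_image.2 ⟨k, ?_, ?_⟩
      · rw [Finset.mem_Ico]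
        constructor
        · by_contra hc
          have : k = 0 := by omega
          rw [this, colHead_zero] at hk
          have := Nat.mul_pos hn hj.1.1.1
          omega
        · by_contra hc
          have h1 := colHead_mono nu (not_lt.1 hc)
          rw [ht, hk] at h1
          have := Nat.le_of_mul_le_mul_left h1 hn
          omega
      · simp only [hk]
        exact Nat.mul_div_cancel_left j hn
    have h1 := (Finset.card_le_card hsub).trans Finset.card_image_le
    rw [Nat.card_Ico] at h1
    omega

lemma part2 {n : ℕ} (hn : 0 < n) (lam : YoungDiagram) (N : ℕ)
    (hN : n * lam.cells.card ≤ N)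
    (co : YoungDiagram →₀ ℤ)
    (hcard : ∀ l ∈ co.support, l.cells.card = n * lam.cells.card)
    (hexp : pleth n N (schurPoly N lam) = ∑ l ∈ co.support, co l • schurPoly N l)
    (mu : YoungDiagram) (hmu : mu ∈ co.support) (r : ℕ) :
    colHead mu r ≤ n * colHead lam r := by
  obtain ⟨nu, hnu, hle, hmax⟩ := pick co.support colHead colHead_injective hmu
  have hnc := hcard nu hnu
  have hbd : bd nu ⊆ Finset.Ico 1 (n * lam.cells.card) := hnc ▸ bd_sub nu
  have hphi : phi N (n * lam.cells.card) (bd nu) (pleth n N (schurPoly N lam)) ≠ 0 := by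
    rw [hexp, phi_sum, Finset.sum_eq_single nu]
    · exact mul_ne_zero (Finsupp.mem_support_iff.1 hnu) (phi_bd_ne hN hnc)
    · intro l hl hne
      by_contra hcon
      obtain ⟨P, hP, hPB⟩ := exists_of_phi hbd hN (hcard l hl) (right_ne_zero_of_mul hcon)
      apply hne
      apply hmax l hl
      intro m
      have := dom_of_tab (n := 1) (D := n * lam.cells.card) one_pos (nu := nu) (l := l)
        (by rw [hnc, one_mul]) (fun b _ => one_dvd b) hP (by
          intro j h1 h2
          rcases hPB j h1 h2 with h | h
          · left
            simp only [Finset.mem_filter, Finset.mem_Ico, one_mul]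
            exact ⟨⟨h1, h2⟩, h⟩
          · exact Or.inr h) m
      simpa using this
    · intro h; exact absurd hnu h
  obtain ⟨hdvd, hphi'⟩ := phi_pleth hn hN hbd _ hphi
  have hlN : lam.cells.card ≤ N := (Nat.le_mul_of_pos_left _ hn).trans hN
  obtain ⟨P, hP, hPB⟩ := exists_of_phi (Finset.filter_subset _ _) hlN rfl hphi'
  exact (hle r).trans (dom_of_tab hn hnc hdvd hP hPB r)

end SXP

/-- **Upper bound for the SXP coefficients.**
Let `n ≥ 1` and let `λ, μ` be partitions with `⟨s_μ, p_n ∘ s_λ⟩ ≠ 0`, where the SXP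
coefficient `⟨s_μ, p_n ∘ s_λ⟩` is the coefficient of `s_μ` in the Schur expansion of
`p_n ∘ s_λ = s_λ(x_1^n, …, x_N^n)` in `N ≥ n·|λ|` variables (encoded by a finitely
supported coefficient family `co`, supported on diagrams with at most `N` rows,
which makes it unique).  Define `a_r = ⌊(n|λ| − Σ_{i>r} λ_i)/r⌋` and
`b_c = ⌊(n|λ| − Σ_{j>c} λ'_j)/c⌋`, and let `Ξ¹ = (a_1, a_2, …)`,
`Ξ² = (b_1, b_2, …)'`.  Then `[μ] ⊆ [Ξ¹]` and `[μ] ⊆ [Ξ²]`, i.e. `μ_r ≤ a_r` for all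
`r ≥ 1` and `μ'_c ≤ b_c` for all `c ≥ 1`; that is, `[μ] ⊆ [Ξ¹] ∩ [Ξ²]`. -/
theorem SXP_upper_bound {n : ℕ} (hn : 0 < n) (lam mu : YoungDiagram)
    (N : ℕ) (hN : n * lam.cells.card ≤ N)
    (co : YoungDiagram →₀ ℤ)
    (hrows : ∀ l ∈ co.support, l.colLen 0 ≤ N)
    (hexp : aeval (fun i : Fin N => (X i : MvPolynomial (Fin N) ℤ) ^ n) (schurPoly N lam)
        = ∑ l ∈ co.support, co l • schurPoly N l)
    (hne : co mu ≠ 0) :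
    (∀ r, 1 ≤ r →
      mu.rowLen (r - 1) ≤ (n * lam.cells.card - tailSum lam r) / r) ∧
    (∀ c, 1 ≤ c →
      mu.colLen (c - 1) ≤ (n * lam.cells.card - tailSum lam.transpose c) / c) := by
  have hmu : mu ∈ co.support := Finsupp.mem_support_iff.2 hne
  have h1 := SXP.part1 hn lam N co hrows hexp
  constructor
  · intro r hr
    exact SXP.final_ineq lam mu n r hn hr ((h1 mu hmu).2 r)
  · intro c hc
    have h2 := SXP.part2 hn lam N hN co (fun l hl => (h1 l hl).1) hexp mu hmu c
    rw [SXP.colHead_eq, SXP.colHead_eq] at h2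
    have h3 := SXP.final_ineq lam.transpose mu.transpose n c hn hc h2
    rwa [YoungDiagram.rowLen_transpose, SXP.card_transpose] at h3
end

section
/- Let λ be a partition and r, c nonnegative integers with λ_{r+1} ≤ c (i.e. the point (c,r) is not in the Young diagram [λ]). Then there exists a semistandard Young tableau of shape λ in the signed alphabet {−c < −c+1 < ⋯ < −1 < 1 < 2 < ⋯ < r} (negative letters strictly increasing along rows and weakly increasing down columns, positive letters weakly increasing along rows and strictly increasing down columns); explicitly, for each k < c (columns 0-indexed) the cells of [λ] lying in the k-th column are filled with the letter k − c, and every remaining cell in the i-th row (0-indexed) is filled with the positive letter i+1, and this filling is a valid semistandard signed tableau. -/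
open MvPolynomial Finset

/-- The canonical signed (super) filling for the alphabet `{−c, …, −1, 1, …, r}`:
the cell in row `i`, column `j` (0-indexed) receives the negative letter `j − c`
if `j < c`, and the positive letter `i + 1` otherwise. -/
def canonicalFilling (c : ℕ) (i j : ℕ) : ℤ :=
  if j < c then (j : ℤ) - (c : ℤ) else (i : ℤ) + 1

/-- **The canonical semistandard signed tableau.**
Let `λ` be a partition and `r, c ≥ 0` with `λ_{r+1} ≤ c`, i.e. the point `(c, r)`
(column `c`, row `r`, 0-indexed) is not in the Young diagram `[λ]`.  Then the
canonical filling — for `k < c` the `k`-th column of `[λ]` is filled with the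
negative letter `k − c`, and every remaining cell in the `i`-th row is filled with
the positive letter `i + 1` — is a valid semistandard signed tableau of shape `λ`
in the alphabet `{−c < ⋯ < −1 < 1 < ⋯ < r}`: its entries are nonzero letters in
`[−c, r]`, weakly increasing along rows and down columns, with negative letters
strictly increasing along rows and positive letters strictly increasing down
columns.  In particular such a tableau exists. -/
theorem canonicalFilling_isSemistandardSigned (lam : YoungDiagram) (r c : ℕ)
    (h : (r, c) ∉ lam) :
    (∀ i j, (i, j) ∈ lam →
        canonicalFilling c i j ≠ 0 ∧
        -(c : ℤ) ≤ canonicalFilling c i j ∧ canonicalFilling c i j ≤ (r : ℤ)) ∧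
    (∀ i j, (i, j) ∈ lam → (i, j + 1) ∈ lam →
        canonicalFilling c i j ≤ canonicalFilling c i (j + 1)) ∧
    (∀ i j, (i, j) ∈ lam → (i + 1, j) ∈ lam →
        canonicalFilling c i j ≤ canonicalFilling c (i + 1) j) ∧
    (∀ i j, (i, j) ∈ lam → (i, j + 1) ∈ lam → canonicalFilling c i j < 0 →
        canonicalFilling c i j < canonicalFilling c i (j + 1)) ∧
    (∀ i j, (i, j) ∈ lam → (i + 1, j) ∈ lam → 0 < canonicalFilling c (i + 1) j →
        canonicalFilling c i j < canonicalFilling c (i + 1) j) := by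
  have key : ∀ i j, (i, j) ∈ lam → c ≤ j → i < r := by
    intro i j hij hcj
    by_contra hri
    exact h (lam.up_left_mem (not_lt.mp hri) hcj hij)
  unfold canonicalFilling
  refine ⟨fun i j hij => ?_, fun i j _ _ => ?_, fun i j _ _ => ?_,
    fun i j _ _ => ?_, fun i j _ _ => ?_⟩
  · have := key i j hij
    split_ifs <;> refine ⟨?_, ?_, ?_⟩ <;> omega
  all_goals split_ifs <;> push_cast <;> omega
end
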